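/- arXiv:1108.5930 — 2 statements merged into one kernel-verified Lean document; each statement's English description precedes it below -/
import Mathlib

section
/- Let d, e ∈ ℕ₀, let I be a real radical ideal of ℝ[X₁,…,Xₙ], and let U ∈ ℝ^(s(d)×s(d)) be a symmetric matrix such that the polynomial [X]_dᵀ U [X]_d belongs to I. Suppose W ∈ ℝ^(s(e)×s(d)) satisfies that U − WᵀW is positive semidefinite. Then the polynomial [X]_eᵀ W [X]_d belongs to I. -/
open MvPolynomial Matrix

/-- The column vector `[X]_d` of all monomials of degree at most `d` in `n` variables,
indexed by `Sym (Fin (n+1)) d` (multisets of size `d` over `{0, 1, …, n}`, where the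
index `0` plays the role of a homogenizing variable evaluated at `1`): the map sending
such a multiset to the corresponding monomial is a bijection onto the monomials of degree
at most `d`, and `Fintype.card (Sym (Fin (n+1)) d) = (d+n).choose n = s(d)`. -/
noncomputable def monVec (n d : ℕ) : Sym (Fin (n+1)) d → MvPolynomial (Fin n) ℝ :=
  fun s => (Multiset.map (fun i : Fin (n+1) =>
      Fin.cases (motive := fun _ => MvPolynomial (Fin n) ℝ) 1 (fun j => MvPolynomial.X j) i)
      (s : Multiset (Fin (n+1)))).prod

/-- The scalar polynomial `[X]_eᵀ W [X]_d` for a real matrix `W`. -/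
noncomputable def quadFormPoly {n d e : ℕ}
    (W : Matrix (Sym (Fin (n+1)) e) (Sym (Fin (n+1)) d) ℝ) : MvPolynomial (Fin n) ℝ :=
  ∑ a, ∑ b, MvPolynomial.C (W a b) * monVec n e a * monVec n d b

/-- An ideal `I ⊆ ℝ[X₁, …, Xₙ]` is real radical if whenever `f^(2k) + s ∈ I` with `k ≥ 1`
and `s` a sum of squares, then `f ∈ I`. -/
def IsRealRadical {n : ℕ} (I : Ideal (MvPolynomial (Fin n) ℝ)) : Prop :=
  ∀ (f : MvPolynomial (Fin n) ℝ) (k : ℕ) (s : MvPolynomial (Fin n) ℝ),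
    0 < k → (∃ (r : ℕ) (p : Fin r → MvPolynomial (Fin n) ℝ), s = ∑ i, (p i)^2) →
    f^(2*k) + s ∈ I → f ∈ I

/-- If a sum of squares of polynomials lies in a real radical ideal, so does each of them. -/
lemma IsRealRadical.mem_of_sum_sq_mem {n : ℕ} {I : Ideal (MvPolynomial (Fin n) ℝ)}
    (hI : IsRealRadical I) {ι : Type*} [Fintype ι] (p : ι → MvPolynomial (Fin n) ℝ)
    (h : ∑ i, p i ^ 2 ∈ I) (i : ι) : p i ∈ I := by
  classical
  refine hI (p i) 1 (∑ j, Function.update p i 0 j ^ 2) one_pos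
    ⟨Fintype.card ι, fun k => Function.update p i 0 ((Fintype.equivFin ι).symm k), ?_⟩ ?_
  · exact ((Fintype.equivFin ι).symm.sum_comp fun j => Function.update p i 0 j ^ 2).symm
  · convert h using 1
    rw [← Finset.add_sum_erase _ _ (Finset.mem_univ i),
      ← Finset.add_sum_erase _ (fun j => p j ^ 2) (Finset.mem_univ i)]
    have hsum : ∑ j ∈ Finset.univ.erase i, Function.update p i 0 j ^ 2 =
        ∑ j ∈ Finset.univ.erase i, p j ^ 2 :=
      Finset.sum_congr rfl fun j hj => by
        rw [Function.update_of_ne (Finset.ne_of_mem_erase hj)]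
    rw [hsum]
    simp

/-- The quadratic form of a Gram matrix `BᵀB` is the sum of the squares of the entries of
`B [X]_d`. -/
lemma quadFormPoly_transpose_mul_self {n d : ℕ} {ι : Type*} [Fintype ι]
    (B : Matrix ι (Sym (Fin (n+1)) d) ℝ) :
    quadFormPoly (Bᵀ * B) = ∑ i, (∑ b, C (B i b) * monVec n d b) ^ 2 := by
  simp only [quadFormPoly, Matrix.mul_apply, Matrix.transpose_apply, map_sum, map_mul, sq,
    Finset.sum_mul, Finset.mul_sum]
  rw [Finset.sum_comm (s := (Finset.univ : Finset ι))]
  refine Finset.sum_congr rfl fun a _ => ?_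
  rw [Finset.sum_comm]
  exact Finset.sum_congr rfl fun i _ => Finset.sum_congr rfl fun b _ => by ring

/-- A real positive semidefinite matrix is a Gram matrix. -/
lemma Matrix.PosSemidef.exists_eq_transpose_mul_self {κ : Type*} [Finite κ]
    {M : Matrix κ κ ℝ} (hM : M.PosSemidef) :
    ∃ (m : ℕ) (V : Matrix (Fin m) κ ℝ), M = Vᵀ * V := by
  obtain ⟨m, v, rfl⟩ := Matrix.posSemidef_iff_eq_sum_vecMulVec.mp hM
  refine ⟨m, Matrix.of v, ?_⟩
  ext a b
  simp [Matrix.sum_apply, Matrix.vecMulVec_apply, Matrix.mul_apply]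

/-- **Proposition.** Let `I` be a real radical ideal of `ℝ[X₁, …, Xₙ]` and `U` a symmetric
`s(d) × s(d)` matrix with `[X]_dᵀ U [X]_d ∈ I`. If `W` is an `s(e) × s(d)` matrix with
`U - WᵀW` positive semidefinite, then `[X]_eᵀ W [X]_d ∈ I`. -/
theorem quadFormPoly_mem_realRadical_ideal
    (n d e : ℕ) (I : Ideal (MvPolynomial (Fin n) ℝ)) (hI : IsRealRadical I)
    (U : Matrix (Sym (Fin (n+1)) d) (Sym (Fin (n+1)) d) ℝ) (hU : U.IsSymm)
    (hUI : quadFormPoly U ∈ I)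
    (W : Matrix (Sym (Fin (n+1)) e) (Sym (Fin (n+1)) d) ℝ)
    (hW : (U - Wᵀ * W).PosSemidef) :
    quadFormPoly W ∈ I := by
  obtain ⟨m, V, hV⟩ := hW.exists_eq_transpose_mul_self
  have hUB : U = (Matrix.fromRows W V)ᵀ * Matrix.fromRows W V := by
    rw [Matrix.transpose_fromRows, Matrix.fromCols_mul_fromRows, ← hV, add_sub_cancel]
  rw [hUB, quadFormPoly_transpose_mul_self] at hUI
  have hrow : ∀ a, ∑ b, C (W a b) * monVec n d b ∈ I := fun a => by
    simpa using hI.mem_of_sum_sq_mem _ hUI (Sum.inl a)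
  have hquad : quadFormPoly W = ∑ a, monVec n e a * ∑ b, C (W a b) * monVec n d b := by
    simp only [quadFormPoly, Finset.mul_sum]
    exact Finset.sum_congr rfl fun a _ => Finset.sum_congr rfl fun b _ => by ring
  rw [hquad]
  exact I.sum_mem fun a _ => I.mul_mem_left _ (hrow a)
end

section
/- Let L be a linear pencil of size m in n variables. Then for every linear polynomial f ∈ ℝ[X₁,…,Xₙ]₁: f ≥ 0 on S_L if and only if f + ε ∈ M_L for every ε > 0. -/
open MvPolynomial Matrix

/-- The linear pencil `L = A 0 + X 1 * A 1 + ... + X n * A n` as a symmetric matrix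
with entries in the polynomial ring `ℝ[X 1, ..., X n]`. -/
noncomputable def pencilPoly {n m : ℕ} (A : Fin (n+1) → Matrix (Fin m) (Fin m) ℝ) :
    Matrix (Fin m) (Fin m) (MvPolynomial (Fin n) ℝ) :=
  fun a b => MvPolynomial.C (A 0 a b) + ∑ i : Fin n, MvPolynomial.X i * MvPolynomial.C (A i.succ a b)

/-- Evaluation of the pencil at a point `x ∈ ℝⁿ`. -/
def pencilEval {n m : ℕ} (A : Fin (n+1) → Matrix (Fin m) (Fin m) ℝ) (x : Fin n → ℝ) :
    Matrix (Fin m) (Fin m) ℝ :=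
  A 0 + ∑ i : Fin n, x i • A i.succ

/-- The spectrahedron `S_L = {x ∈ ℝⁿ ∣ L(x) ⪰ 0}`. -/
def specSet {n m : ℕ} (A : Fin (n+1) → Matrix (Fin m) (Fin m) ℝ) : Set (Fin n → ℝ) :=
  {x | (pencilEval A x).PosSemidef}

/-- `vᵀ L v` for a vector `v` of polynomials. -/
noncomputable def vLv {n m : ℕ} (A : Fin (n+1) → Matrix (Fin m) (Fin m) ℝ)
    (v : Fin m → MvPolynomial (Fin n) ℝ) : MvPolynomial (Fin n) ℝ :=
  ∑ a : Fin m, ∑ b : Fin m, v a * pencilPoly A a b * v b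

/-- Membership in the quadratic module `M_L` associated to the pencil `L`:
`p = s + Σⱼ vⱼᵀ L vⱼ` with `s` a sum of squares. -/
def memQM {n m : ℕ} (A : Fin (n+1) → Matrix (Fin m) (Fin m) ℝ)
    (p : MvPolynomial (Fin n) ℝ) : Prop :=
  ∃ (k r : ℕ) (q : Fin k → MvPolynomial (Fin n) ℝ)
    (v : Fin r → Fin m → MvPolynomial (Fin n) ℝ),
    p = ∑ i, (q i)^2 + ∑ j, vLv A (v j)

/-- In finite dimension the convex hull of a compact set is compact. -/
lemma isCompact_convexHull_of_finiteDimensional {E : Type*} [AddCommGroup E] [Module ℝ E]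
    [TopologicalSpace E] [ContinuousAdd E] [ContinuousSMul ℝ E] [FiniteDimensional ℝ E]
    {s : Set E} (hs : IsCompact s) : IsCompact (convexHull ℝ s) := by
  obtain rfl | ⟨x₀, hx₀⟩ := s.eq_empty_or_nonempty
  · simp
  let κ := Fin (Module.finrank ℝ E + 1)
  have himage : convexHull ℝ s =
      (fun p : (κ → ℝ) × (κ → E) => ∑ i, p.1 i • p.2 i) ''
        (stdSimplex ℝ κ ×ˢ Set.univ.pi fun _ => s) := by
    refine Set.Subset.antisymm (fun x hx => ?_) ?_
    · obtain ⟨ι, _, z, w, hz, hind, hw, hw1, rfl⟩ := eq_pos_convex_span_of_mem_convexHull hx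
      obtain ⟨e⟩ : Nonempty (ι ↪ κ) := Function.Embedding.nonempty_of_card_le <| by
        refine hind.card_le_finrank_succ.trans ?_
        rw [Fintype.card_fin]
        exact Nat.succ_le_succ (Submodule.finrank_le _)
      refine ⟨(Function.extend e w 0, Function.extend e z fun _ => x₀), ⟨⟨fun j => ?_, ?_⟩, ?_⟩, ?_⟩
      · by_cases hj : ∃ i, e i = j
        · obtain ⟨i, rfl⟩ := hj
          simpa [e.injective.extend_apply] using (hw i).le
        · simp [Function.extend_apply' _ _ _ hj]
      · rw [← hw1]
        refine (Fintype.sum_of_injective e e.injective _ _ (fun j hj => ?_) fun i => ?_).symm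
        · exact Function.extend_apply' _ _ _ hj
        · exact (e.injective.extend_apply _ _ _).symm
      · intro j _
        by_cases hj : ∃ i, e i = j
        · obtain ⟨i, rfl⟩ := hj
          simpa [e.injective.extend_apply] using hz ⟨i, rfl⟩
        · simpa [Function.extend_apply' _ _ _ hj] using hx₀
      · refine (Fintype.sum_of_injective e e.injective _ _ (fun j hj => ?_) fun i => ?_).symm
        · simp [Function.extend_apply' _ _ _ hj]
        · simp [e.injective.extend_apply]
    · rintro _ ⟨⟨w, z⟩, ⟨hw, hz⟩, rfl⟩
      exact (convex_convexHull ℝ s).sum_mem (fun i _ => hw.1 i) hw.2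
        fun i _ => subset_convexHull ℝ s (hz i trivial)
  rw [himage]
  refine ((isCompact_stdSimplex ℝ κ).prod (isCompact_univ_pi fun _ => hs)).image ?_
  fun_prop

section QuadraticModule

variable {n m : ℕ} {A : Fin (n + 1) → Matrix (Fin m) (Fin m) ℝ}

lemma vLv_eq_dotProduct (v : Fin m → MvPolynomial (Fin n) ℝ) :
    vLv A v = v ⬝ᵥ (pencilPoly A *ᵥ v) := by
  simp [vLv, dotProduct, mulVec, Finset.mul_sum, mul_assoc]

lemma pencilPoly_isSymm (hA : ∀ i, (A i).IsSymm) : (pencilPoly A).IsSymm := by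
  ext1 a b
  simp only [transpose_apply, pencilPoly, (hA _).apply a b]

lemma vLv_smul (q : MvPolynomial (Fin n) ℝ) (v : Fin m → MvPolynomial (Fin n) ℝ) :
    vLv A (q • v) = q ^ 2 * vLv A v := by
  simp only [vLv_eq_dotProduct, mulVec_smul, dotProduct_smul, smul_dotProduct, smul_eq_mul]
  ring

lemma vLv_add (hA : ∀ i, (A i).IsSymm) (v w : Fin m → MvPolynomial (Fin n) ℝ) :
    vLv A (v + w) = vLv A v + 2 * (v ⬝ᵥ (pencilPoly A *ᵥ w)) + vLv A w := by
  have h : w ⬝ᵥ (pencilPoly A *ᵥ v) = v ⬝ᵥ (pencilPoly A *ᵥ w) := by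
    rw [dotProduct_mulVec, ← mulVec_transpose, (pencilPoly_isSymm hA).eq, dotProduct_comm]
  simp only [vLv_eq_dotProduct, mulVec_add, dotProduct_add, add_dotProduct, h]
  ring

lemma C_half_mul_two :
    (C (1 / 2) : MvPolynomial (Fin n) ℝ) * 2 = 1 := by
  rw [show (2 : MvPolynomial (Fin n) ℝ) = C 2 from (map_ofNat C 2).symm, ← C_mul]
  norm_num

namespace memQM

variable {p q : MvPolynomial (Fin n) ℝ}

lemma vLv_mem (v : Fin m → MvPolynomial (Fin n) ℝ) : memQM A (vLv A v) :=
  ⟨0, 1, Fin.elim0, fun _ => v, by simp⟩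

lemma sq (p : MvPolynomial (Fin n) ℝ) : memQM A (p ^ 2) :=
  ⟨1, 0, fun _ => p, Fin.elim0, by simp⟩

lemma zero : memQM A 0 :=
  ⟨0, 0, Fin.elim0, Fin.elim0, by simp⟩

lemma add (hp : memQM A p) (hq : memQM A q) : memQM A (p + q) := by
  obtain ⟨k₁, r₁, s₁, v₁, rfl⟩ := hp
  obtain ⟨k₂, r₂, s₂, v₂, rfl⟩ := hq
  refine ⟨k₁ + k₂, r₁ + r₂, Fin.append s₁ s₂, Fin.append v₁ v₂, ?_⟩
  simp only [Fin.sum_univ_add, Fin.append_left, Fin.append_right]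
  ring

lemma sq_mul (h : MvPolynomial (Fin n) ℝ) (hp : memQM A p) : memQM A (h ^ 2 * p) := by
  obtain ⟨k, r, s, v, rfl⟩ := hp
  refine ⟨k, r, fun i => h * s i, fun j => h • v j, ?_⟩
  simp only [vLv_smul, mul_pow, ← Finset.mul_sum, mul_add]

lemma C_mem {c : ℝ} (hc : 0 ≤ c) : memQM A (C c) := by
  simpa [← C_pow, Real.sq_sqrt hc] using sq (A := A) (C (√c))

lemma C_mul {c : ℝ} (hc : 0 ≤ c) (hp : memQM A p) : memQM A (C c * p) := by
  simpa [← C_pow, Real.sq_sqrt hc] using sq_mul (C (√c)) hp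

/-- If `-1` lies in the quadratic module, then every polynomial does. -/
lemma of_neg_one_mem (h : memQM A (-1)) (p : MvPolynomial (Fin n) ℝ) : memQM A p := by
  have key := (sq (A := A) (C (1 / 2) * (p + 1))).add (sq_mul (C (1 / 2) * (p - 1)) h)
  have h2 := C_half_mul_two (n := n)
  convert key using 1
  linear_combination (-p) * (C (1 / 2) * 2 + 1) * h2

lemma eval_nonneg {x : Fin n → ℝ} (hx : x ∈ specSet A) (hp : memQM A p) : 0 ≤ eval x p := by
  obtain ⟨k, r, s, v, rfl⟩ := hp
  rw [map_add, map_sum, map_sum]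
  refine add_nonneg (Finset.sum_nonneg fun i _ => by rw [map_pow]; positivity)
    (Finset.sum_nonneg fun j _ => ?_)
  convert Matrix.PosSemidef.dotProduct_mulVec_nonneg hx (fun a => eval x (v j a)) using 1
  simp [vLv, pencilPoly, pencilEval, dotProduct, mulVec, Finset.mul_sum, Matrix.sum_apply,
    mul_assoc]

end memQM

/-- Polynomials that belong to the quadratic module after adding any positive constant. -/
def memQMApprox (A : Fin (n + 1) → Matrix (Fin m) (Fin m) ℝ) (p : MvPolynomial (Fin n) ℝ) : Prop :=
  ∀ ε : ℝ, 0 < ε → memQM A (p + C ε)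

namespace memQMApprox

variable {p q : MvPolynomial (Fin n) ℝ}

lemma of_memQM (hp : memQM A p) : memQMApprox A p :=
  fun _ hε => hp.add (memQM.C_mem hε.le)

lemma add (hp : memQMApprox A p) (hq : memQMApprox A q) : memQMApprox A (p + q) := by
  intro ε hε
  convert (hp _ (half_pos hε)).add (hq _ (half_pos hε)) using 1
  rw [add_add_add_comm, ← C_add, add_halves]

lemma C_mul {c : ℝ} (hc : 0 < c) (hp : memQMApprox A p) : memQMApprox A (C c * p) := by
  intro ε hε
  convert (hp (ε / c) (div_pos hε hc)).C_mul hc.le using 1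
  rw [mul_add, ← MvPolynomial.C_mul, mul_div_cancel₀ _ hc.ne']

end memQMApprox

/-- The ideal of polynomials all of whose multiples belong to the quadratic module after adding
any positive constant. -/
def approxSupport (A : Fin (n + 1) → Matrix (Fin m) (Fin m) ℝ) :
    Ideal (MvPolynomial (Fin n) ℝ) where
  carrier := {p | ∀ h, memQMApprox A (h * p)}
  zero_mem' h := by simpa using memQMApprox.of_memQM memQM.zero
  add_mem' hp hq h := by simpa only [mul_add] using (hp h).add (hq h)
  smul_mem' c p hp h := by simpa only [smul_eq_mul, mul_assoc] using hp (h * c)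

lemma mem_approxSupport_of_neg {p q : MvPolynomial (Fin n) ℝ} (hp : memQM A p) (hq : memQM A q)
    (hpq : p + q ∈ approxSupport A) : p ∈ approxSupport A := by
  intro h
  have h2 := C_half_mul_two (n := n)
  convert (memQMApprox.of_memQM ((hp.sq_mul (C (1 / 2) * (h + 1))).add
    (hq.sq_mul (C (1 / 2) * (h - 1))))).add (hpq (-(C (1 / 2) * (h - 1)) ^ 2)) using 1
  linear_combination (-h * p) * (C (1 / 2) * 2 + 1) * h2

lemma mem_approxSupport_of_neg_sq {p : MvPolynomial (Fin n) ℝ}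
    (hp : ∀ h, memQMApprox A (-(h ^ 2 * p ^ 2))) : p ∈ approxSupport A := by
  intro h ε hε
  obtain ⟨s, hs, rfl⟩ : ∃ s : ℝ, 0 < s ∧ ε = s ^ 2 + s ^ 2 :=
    ⟨√(ε / 2), by positivity, by rw [Real.sq_sqrt (by positivity)]; ring⟩
  have hC : (C s * C (1 / (2 * s)) * 2 : MvPolynomial (Fin n) ℝ) = 1 := by
    rw [show (2 : MvPolynomial (Fin n) ℝ) = C 2 from (map_ofNat C 2).symm, ← C_mul, ← C_mul]
    rw [← C_1]
    congr 1
    field_simp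
  convert (memQM.sq (A := A) (C s + C (1 / (2 * s)) * (h * p))).add
    (hp (C (1 / (2 * s)) * h) (s ^ 2) (by positivity)) using 1
  rw [C_add, C_pow]
  linear_combination (-h * p) * hC

/-- The affine polynomial with the given coefficients. -/
noncomputable def affinePoly (n : ℕ) : (Fin (n + 1) → ℝ) →ₗ[ℝ] MvPolynomial (Fin n) ℝ where
  toFun a := C (a 0) + ∑ i : Fin n, X i * C (a i.succ)
  map_add' a b := by
    simp only [Pi.add_apply, C_add, mul_add, Finset.sum_add_distrib]
    ring
  map_smul' c a := by
    simp only [Pi.smul_apply, smul_eq_mul, C_mul, RingHom.id_apply, smul_eq_C_mul, mul_add,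
      Finset.mul_sum]
    congr 1
    exact Finset.sum_congr rfl fun i _ => by ring

lemma affinePoly_apply (a : Fin (n + 1) → ℝ) :
    affinePoly n a = C (a 0) + ∑ i : Fin n, X i * C (a i.succ) := rfl

lemma exists_affinePoly_eq {f : MvPolynomial (Fin n) ℝ} (hf : f.totalDegree ≤ 1) :
    ∃ a, affinePoly n a = f := by
  change f ∈ LinearMap.range (affinePoly n)
  rw [f.as_sum]
  refine Submodule.sum_mem _ fun s hs => ?_
  have hle : s.degree ≤ 1 := (le_totalDegree hs).trans hf
  obtain h0 | h1 : s.degree = 0 ∨ s.degree = 1 := by omega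
  · rw [Finsupp.degree_eq_zero_iff] at h0
    subst h0
    exact ⟨Pi.single 0 (coeff 0 f), by simp [affinePoly_apply]⟩
  · obtain ⟨i, rfl⟩ := (Finsupp.sum_eq_one_iff s).mp h1
    refine ⟨Pi.single i.succ (coeff (Finsupp.single i 1) f), ?_⟩
    rw [affinePoly_apply, Finset.sum_eq_single i]
    · simp [X, C_mul_monomial, mul_comm]
    · intro j _ hj
      simp [hj]
    · simp

/-- The coefficients of the affine polynomial `uᵀ L v`. -/
def pencilForm (A : Fin (n + 1) → Matrix (Fin m) (Fin m) ℝ) :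
    (Fin m → ℝ) →ₗ[ℝ] (Fin m → ℝ) →ₗ[ℝ] (Fin (n + 1) → ℝ) :=
  LinearMap.mk₂ ℝ (fun u v i => u ⬝ᵥ (A i *ᵥ v))
    (fun _ _ _ => by ext; simp [add_dotProduct])
    (fun _ _ _ => by ext; simp)
    (fun _ _ _ => by ext; simp [mulVec_add, dotProduct_add])
    (fun _ _ _ => by ext; simp [mulVec_smul])

lemma pencilForm_apply (u v : Fin m → ℝ) (i : Fin (n + 1)) :
    pencilForm A u v i = u ⬝ᵥ (A i *ᵥ v) := rfl

lemma pencilForm_comm (hA : ∀ i, (A i).IsSymm) (u v : Fin m → ℝ) :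
    pencilForm A u v = pencilForm A v u := by
  ext i
  rw [pencilForm_apply, pencilForm_apply, dotProduct_mulVec, ← mulVec_transpose, (hA i).eq,
    dotProduct_comm]

lemma affinePoly_pencilForm (u v : Fin m → ℝ) :
    affinePoly n (pencilForm A u v) =
      (fun a => C (u a)) ⬝ᵥ (pencilPoly A *ᵥ fun a => C (v a)) := by
  simp only [affinePoly_apply, pencilForm_apply, dotProduct, mulVec, pencilPoly, map_sum, map_mul,
    Finset.mul_sum, Finset.sum_mul, add_mul, mul_add, Finset.sum_add_distrib]
  congr 1
  rw [Finset.sum_comm]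
  refine Finset.sum_congr rfl fun a _ => ?_
  rw [Finset.sum_comm]
  exact Finset.sum_congr rfl fun b _ => Finset.sum_congr rfl fun i _ => by ring

lemma memQM_affinePoly_pencilForm (u : Fin m → ℝ) :
    memQM A (affinePoly n (pencilForm A u u)) := by
  rw [affinePoly_pencilForm, ← vLv_eq_dotProduct]
  exact memQM.vLv_mem _

/-- An isotropic vector of the pencil modulo the approximate support lies in its kernel. -/
lemma affinePoly_pencilForm_mem_approxSupport (hA : ∀ i, (A i).IsSymm) {u : Fin m → ℝ}
    (hu : affinePoly n (pencilForm A u u) ∈ approxSupport A) (v : Fin m → ℝ) :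
    affinePoly n (pencilForm A u v) ∈ approxSupport A := by
  refine mem_approxSupport_of_neg_sq fun h => ?_
  set r := affinePoly n (pencilForm A u v) with hr
  set t := affinePoly n (pencilForm A v v) with ht
  set l := affinePoly n (pencilForm A u u) with hl
  have h2 := C_half_mul_two (n := n)
  set p := -(C (1 / 2) * h * (1 + t)) with hp
  have key := memQM.vLv_mem (A := A) (p • (fun a => C (u a)) + (h * r) • fun a => C (v a))
  rw [vLv_add hA, vLv_smul, vLv_smul, mulVec_smul, dotProduct_smul, smul_dotProduct,
    vLv_eq_dotProduct, vLv_eq_dotProduct, ← affinePoly_pencilForm, ← affinePoly_pencilForm,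
    ← affinePoly_pencilForm, ← hr, ← ht, ← hl, smul_eq_mul, smul_eq_mul] at key
  convert (memQMApprox.of_memQM key).add (hu (-p ^ 2)) using 1
  linear_combination (2 * h * r ^ 2) * hp + (h ^ 2 * r ^ 2 * (1 + t)) * h2

/-- Coefficient vectors of affine polynomials in the approximate support. -/
noncomputable def affineSupport (A : Fin (n + 1) → Matrix (Fin m) (Fin m) ℝ) : Submodule ℝ (Fin (n + 1) → ℝ) :=
  ((approxSupport A).restrictScalars ℝ).comap (affinePoly n)

lemma mem_affineSupport {a : Fin (n + 1) → ℝ} :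
    a ∈ affineSupport A ↔ affinePoly n a ∈ approxSupport A := Iff.rfl

/-- The kernel of the pencil modulo its affine support. -/
def pencilKernel (A : Fin (n + 1) → Matrix (Fin m) (Fin m) ℝ) : Submodule ℝ (Fin m → ℝ) where
  carrier := {u | ∀ v, pencilForm A u v ∈ affineSupport A}
  zero_mem' v := by simp
  add_mem' hu hu' v := by simpa using add_mem (hu v) (hu' v)
  smul_mem' c u hu v := by simpa using Submodule.smul_mem _ c (hu v)

lemma mem_pencilKernel_of_pencilForm_self_mem (hA : ∀ i, (A i).IsSymm) {u : Fin m → ℝ}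
    (hu : pencilForm A u u ∈ affineSupport A) : u ∈ pencilKernel A :=
  affinePoly_pencilForm_mem_approxSupport hA hu

lemma affinePoly_single_zero (c : ℝ) : affinePoly n (Pi.single 0 c) = C c := by
  simp [affinePoly_apply]

/-- Coefficient vectors of `1` and of `uᵀ L u` for normalized `u` in `N`. -/
def coneGenerators (A : Fin (n + 1) → Matrix (Fin m) (Fin m) ℝ) (N : Submodule ℝ (Fin m → ℝ)) :
    Set (Fin (n + 1) → ℝ) :=
  insert (Pi.single 0 1) ((fun u => pencilForm A u u) '' (Metric.sphere 0 1 ∩ N))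

lemma isCompact_coneGenerators (N : Submodule ℝ (Fin m → ℝ)) :
    IsCompact (coneGenerators A N) := by
  refine IsCompact.insert (((isCompact_sphere _ _).inter_right
    N.closed_of_finiteDimensional).image ?_) _
  refine continuous_pi fun i => ?_
  simp only [pencilForm_apply, dotProduct, mulVec]
  fun_prop

lemma memQM_affinePoly_of_mem_coneGenerators {N : Submodule ℝ (Fin m → ℝ)}
    {z : Fin (n + 1) → ℝ} (hz : z ∈ coneGenerators A N) : memQM A (affinePoly n z) := by
  obtain rfl | ⟨u, -, rfl⟩ := hz
  · rw [affinePoly_single_zero]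
    exact memQM.C_mem zero_le_one
  · exact memQM_affinePoly_pencilForm u

lemma coneGenerators_disjoint_affineSupport (hA : ∀ i, (A i).IsSymm)
    (hone : ¬ memQM A (-1)) {N : Submodule ℝ (Fin m → ℝ)} (hN : Disjoint (pencilKernel A) N)
    {z : Fin (n + 1) → ℝ} (hz : z ∈ coneGenerators A N) : z ∉ affineSupport A := by
  intro hzW
  obtain rfl | ⟨u, ⟨hu, huN⟩, rfl⟩ := hz
  · rw [mem_affineSupport, affinePoly_single_zero] at hzW
    refine hone ?_
    convert hzW (-2) 1 one_pos using 1
    simp only [C_1]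
    ring
  · have := Submodule.disjoint_def.mp hN u (mem_pencilKernel_of_pencilForm_self_mem hA hzW) huN
    simp [this] at hu

lemma memQM_sum {ι : Type*} (s : Finset ι) {p : ι → MvPolynomial (Fin n) ℝ}
    (hp : ∀ i ∈ s, memQM A (p i)) : memQM A (∑ i ∈ s, p i) :=
  Finset.sum_induction p (memQM A) (fun _ _ => memQM.add) memQM.zero hp

lemma memQM_affinePoly_of_mem_convexHull {N : Submodule ℝ (Fin m → ℝ)}
    {z : Fin (n + 1) → ℝ} (hz : z ∈ convexHull ℝ (coneGenerators A N)) :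
    memQM A (affinePoly n z) := by
  refine convexHull_min (t := {z | memQM A (affinePoly n z)})
    (fun z => memQM_affinePoly_of_mem_coneGenerators) ?_ hz
  intro x hx y hy a b ha hb _
  simpa [smul_eq_C_mul] using (memQM.C_mul ha hx).add (memQM.C_mul hb hy)

lemma convexHull_coneGenerators_disjoint_affineSupport (hA : ∀ i, (A i).IsSymm)
    (hone : ¬ memQM A (-1)) {N : Submodule ℝ (Fin m → ℝ)} (hN : Disjoint (pencilKernel A) N)
    {z : Fin (n + 1) → ℝ} (hz : z ∈ convexHull ℝ (coneGenerators A N)) :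
    z ∉ affineSupport A := by
  classical
  intro hzW
  obtain ⟨ι, _, w, y, hw, hw1, hy, rfl⟩ := mem_convexHull_iff_exists_fintype.mp hz
  obtain ⟨i, -, hi⟩ : ∃ i ∈ Finset.univ, 0 < w i := by
    by_contra! hneg
    linarith [Finset.sum_nonpos hneg]
  refine coneGenerators_disjoint_affineSupport hA hone hN (hy i) ?_
  have hmem (j : ι) : memQM A (affinePoly n (w j • y j)) := by
    simpa [smul_eq_C_mul] using (memQM_affinePoly_of_mem_coneGenerators (hy j)).C_mul (hw j)
  rw [← Submodule.smul_mem_iff _ hi.ne']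
  refine mem_approxSupport_of_neg (hmem i)
    (memQM_sum (Finset.univ.erase i) fun j _ => hmem j) ?_
  rw [Finset.add_sum_erase _ (fun j => affinePoly n (w j • y j)) (Finset.mem_univ i), ← map_sum]
  exact hzW

lemma eval_affinePoly_div {φ : (Fin (n + 1) → ℝ) →ₗ[ℝ] ℝ} (hφ : φ (Pi.single 0 1) ≠ 0)
    (a : Fin (n + 1) → ℝ) :
    eval (fun i : Fin n => φ (Pi.single i.succ 1) / φ (Pi.single 0 1)) (affinePoly n a) =
      φ a / φ (Pi.single 0 1) := by
  have h : φ a = ∑ i, a i * φ (Pi.single i 1) := by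
    conv_lhs => rw [pi_eq_sum_univ' a]
    simp
  rw [h, Fin.sum_univ_succ, add_div, mul_div_cancel_right₀ _ hφ, affinePoly_apply, Finset.sum_div]
  simp only [map_add, map_sum, map_mul, eval_C, eval_X]
  congr 1
  exact Finset.sum_congr rfl fun i _ => by ring

lemma eval_affinePoly_pencilForm (x : Fin n → ℝ) (u v : Fin m → ℝ) :
    eval x (affinePoly n (pencilForm A u v)) = u ⬝ᵥ (pencilEval A x *ᵥ v) := by
  simp [affinePoly_apply, pencilForm_apply, pencilEval, add_mulVec, dotProduct_add, sum_mulVec,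
    dotProduct_sum, smul_mulVec]

lemma memQMApprox_of_nonneg (hA : ∀ i, (A i).IsSymm) {a : Fin (n + 1) → ℝ}
    (ha : ∀ x ∈ specSet A, 0 ≤ eval x (affinePoly n a)) : memQMApprox A (affinePoly n a) := by
  by_cases hone : memQM A (-1)
  · exact memQMApprox.of_memQM (memQM.of_neg_one_mem hone _)
  obtain ⟨N, hN⟩ := Submodule.exists_isCompl (pencilKernel A)
  by_cases hdisj : Disjoint (convexHull ℝ (insert (-a) (coneGenerators A N)))
      (affineSupport A : Set (Fin (n + 1) → ℝ))
  · exfalso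
    obtain ⟨φ, s, t, hs, hst, ht⟩ := geometric_hahn_banach_compact_closed (convex_convexHull ℝ _)
      (isCompact_convexHull_of_finiteDimensional ((isCompact_coneGenerators N).insert (-a)))
      (affineSupport A).convex (affineSupport A).closed_of_finiteDimensional hdisj
    have hneg {z} (hz : z ∈ insert (-a) (coneGenerators A N)) : φ z < 0 := by
      have h0 := ht 0 (zero_mem _)
      rw [map_zero] at h0
      linarith [hs z (subset_convexHull ℝ _ hz)]
    have hzero {z} (hz : z ∈ affineSupport A) : φ z = 0 := by
      by_contra hne
      have := ht _ (Submodule.smul_mem _ ((t - 1) / φ z) hz)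
      rw [map_smul, smul_eq_mul, div_mul_cancel₀ _ hne] at this
      linarith
    have h1 : φ (Pi.single 0 1) < 0 := hneg (Set.mem_insert_of_mem _ (Set.mem_insert _ _))
    have heval := eval_affinePoly_div (φ := φ.toLinearMap) h1.ne
    set x : Fin n → ℝ := fun i => φ.toLinearMap (Pi.single i.succ 1) / φ.toLinearMap (Pi.single 0 1)
    have hx : x ∈ specSet A := by
      refine Matrix.PosSemidef.of_dotProduct_mulVec_nonneg ?_ fun u => ?_
      · ext1 i j
        simp [pencilEval, Matrix.sum_apply, (hA _).apply i j]
      rw [star_trivial, ← eval_affinePoly_pencilForm, heval]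
      refine div_nonneg_of_nonpos ?_ h1.le
      obtain ⟨k, hk, v, hv, rfl⟩ := Submodule.mem_sup.mp
        (hN.sup_eq_top ▸ Submodule.mem_top : u ∈ pencilKernel A ⊔ N)
      have hvk : φ (pencilForm A v k) = 0 := by
        rw [pencilForm_comm hA]
        exact hzero (hk v)
      have hred : φ (pencilForm A (k + v) (k + v)) = φ (pencilForm A v v) := by
        simp [hzero (hk k), hzero (hk v), hvk]
      change φ (pencilForm A (k + v) (k + v)) ≤ 0
      rw [hred]
      obtain rfl | hv0 := eq_or_ne v 0
      · simp
      have hnv : ‖v‖ ≠ 0 := norm_ne_zero_iff.mpr hv0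
      have hunit : φ (pencilForm A (‖v‖⁻¹ • v) (‖v‖⁻¹ • v)) < 0 :=
        hneg (Set.mem_insert_of_mem _ (Set.mem_insert_of_mem _
          ⟨_, ⟨by simp [norm_smul, hnv], N.smul_mem _ hv⟩, rfl⟩))
      simp only [map_smul, LinearMap.smul_apply, smul_eq_mul] at hunit
      have hpos : 0 < ‖v‖⁻¹ := by positivity
      by_contra! hcon
      exact hunit.not_ge (by positivity)
    have hfx := ha x hx
    rw [heval] at hfx
    have hφa : φ (-a) < 0 := hneg (Set.mem_insert _ _)
    rw [map_neg, neg_lt_zero] at hφa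
    exact absurd hfx (not_le.mpr (div_neg_of_pos_of_neg hφa h1))
  · obtain ⟨z, hz, hzW⟩ := Set.not_disjoint_iff.mp hdisj
    rw [convexHull_insert (s := coneGenerators A N) ⟨_, Set.mem_insert _ _⟩, convexJoin_singleton_left] at hz
    simp only [Set.mem_iUnion] at hz
    obtain ⟨y, hy, c, d, hc, hd, hcd, rfl⟩ := hz
    obtain rfl | hc := hc.eq_or_lt
    · obtain rfl : d = 1 := by linarith
      simp only [zero_smul, zero_add, one_smul] at hzW
      exact absurd hzW
        (convexHull_coneGenerators_disjoint_affineSupport hA hone hN.disjoint hy)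
    · have hmem := (memQMApprox.of_memQM
        ((memQM_affinePoly_of_mem_convexHull hy).C_mul hd)).add (hzW (-1))
      have hca : memQMApprox A (C c * affinePoly n a) := by
        convert hmem using 1
        simp only [map_add, map_smul, map_neg, smul_eq_C_mul]
        ring
      convert memQMApprox.C_mul (inv_pos.mpr hc) hca using 1
      rw [← mul_assoc, ← C_mul, inv_mul_cancel₀ hc.ne', C_1, one_mul]

end QuadraticModule

/-- **Corollary.** A linear polynomial `f` is nonnegative on `S_L` if and only if
`f + ε ∈ M_L` for every `ε > 0`. -/
theorem nonneg_on_spectrahedron_iff_add_eps_mem_quadraticModule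
    (n m : ℕ) (A : Fin (n+1) → Matrix (Fin m) (Fin m) ℝ)
    (hsymm : ∀ i, (A i).IsSymm)
    (f : MvPolynomial (Fin n) ℝ) (hf : f.totalDegree ≤ 1) :
    (∀ x ∈ specSet A, 0 ≤ MvPolynomial.eval x f) ↔
      ∀ ε : ℝ, 0 < ε → memQM A (f + MvPolynomial.C ε) := by
  obtain ⟨a, rfl⟩ := exists_affinePoly_eq hf
  refine ⟨memQMApprox_of_nonneg hsymm, fun h x hx => ?_⟩
  refine le_of_forall_pos_le_add fun ε hε => ?_
  simpa using (h ε hε).eval_nonneg hx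
end
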